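/- arXiv:1511.00938 — 2 statements merged into one kernel-verified Lean document; each statement's English description precedes it below -/
import Mathlib

section
/- Let σ = {a} and let V = {V₁, V₂} be the RPQ view with L(V₁) = {a, aa} and L(V₂) = {aa, aaa}. For a finite graph database D over σ, say that T(x,y) holds in V(D) if there exist nodes z₁, z₂ of D such that (x,z₁), (z₁,z₂), (z₂,y) all belong to both V₁(D) and V₂(D); let T* denote the reflexive–transitive closure of the relation {(x,y) : T(x,y) holds in V(D)} on the nodes of D. Then for all nodes x, y of D: if (x,y) ∈ T*, then either there is a path from x to y in D whose length is congruent to 0 modulo 6, or there are both a path from x to y of length congruent to 1 modulo 6 and a path from x to y of length congruent to 5 modulo 6. -/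
/-!
Each of the three constituents of `T` is a pair `(u, v)` in both views, and such a pair is joined
either by a path of length `2`, or by both a path of length `1` and a path of length `3`: it is a
hop of length `2`, up to an error that may be chosen as `+1` or `-1`. A chain of `k` hops then
yields either a path of length exactly `2 * k` or paths of both lengths `2 * k - 1` and `2 * k + 1`,
because a second uncertain hop can be used to cancel the error of the first (`NearPath.hop`).
A chain of `n` steps of `T` consists of `3 * n` hops, so the lengths obtained are `6 * n`,
or both `6 * n - 1` and `6 * n + 1`.
-/

/-- A graph database over alphabet `σ`: a finite set of nodes (drawn from `ℕ`)
together with a binary edge relation for each letter of `σ`. -/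
structure GDB (σ : Type) where
  nodes : Finset ℕ
  edge : σ → ℕ → ℕ → Prop
  edge_mem : ∀ a x y, edge a x y → x ∈ nodes ∧ y ∈ nodes

/-- `D.HasPath x w y`: there is a path from `x` to `y` in `D` whose label is `w`. -/
inductive GDB.HasPath {σ : Type} (D : GDB σ) : ℕ → List σ → ℕ → Prop
  | nil {x : ℕ} : x ∈ D.nodes → GDB.HasPath D x [] x
  | cons {x y z : ℕ} {a : σ} {w : List σ} :
      D.edge a x y → GDB.HasPath D y w z → GDB.HasPath D x (a :: w) z

/-- The path query defined by a language `L`: pairs of nodes connected by a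
path whose label belongs to `L`. -/
def pathQuery {σ : Type} (L : Set (List σ)) (D : GDB σ) (x y : ℕ) : Prop :=
  ∃ w ∈ L, D.HasPath x w y

/-- `L(V₁) = {a, aa}`: words of length 1 or 2 over the one-letter alphabet. -/
def V1lang : Set (List Unit) := {w | w.length = 1 ∨ w.length = 2}

/-- `L(V₂) = {aa, aaa}`: words of length 2 or 3 over the one-letter alphabet. -/
def V2lang : Set (List Unit) := {w | w.length = 2 ∨ w.length = 3}

/-- `T(x,y)` holds in `V(D)`: there are `z₁, z₂` with `(x,z₁)`, `(z₁,z₂)`, `(z₂,y)`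
all in both `V₁(D)` and `V₂(D)`. -/
def Trel (D : GDB Unit) (x y : ℕ) : Prop :=
  ∃ z₁ z₂ : ℕ,
    (pathQuery V1lang D x z₁ ∧ pathQuery V2lang D x z₁) ∧
    (pathQuery V1lang D z₁ z₂ ∧ pathQuery V2lang D z₁ z₂) ∧
    (pathQuery V1lang D z₂ y ∧ pathQuery V2lang D z₂ y)

/-- There is a path of length exactly `n` from `x` to `y`. -/
def LenPath (D : GDB Unit) (x : ℕ) (n : ℕ) (y : ℕ) : Prop :=
  D.HasPath x (List.replicate n ()) y

/-- There is a path of length `2 * k` from `x` to `y`, or there are paths of both lengths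
`2 * k + 1` and `2 * k - 1`; the latter is the `m` with `m + 1 = 2 * k`, which forces `k ≠ 0`. -/
def NearPath (D : GDB Unit) (x : ℕ) (k : ℕ) (y : ℕ) : Prop :=
  LenPath D x (2 * k) y ∨
    (LenPath D x (2 * k + 1) y ∧ ∃ m, m + 1 = 2 * k ∧ LenPath D x m y)

theorem GDB.HasPath.append {D : GDB Unit} {x y z : ℕ} {v w : List Unit}
    (h : D.HasPath x v y) (h' : D.HasPath y w z) : D.HasPath x (v ++ w) z := by
  induction h with
  | nil _ => exact h'
  | cons e _ ih => exact .cons e (ih h')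

theorem LenPath.add {D : GDB Unit} {x y z m n : ℕ}
    (h : LenPath D x m y) (h' : LenPath D y n z) : LenPath D x (m + n) z := by
  unfold LenPath at *
  rw [List.replicate_add]
  exact h.append h'

theorem GDB.HasPath.lenPath {D : GDB Unit} {x y : ℕ} {w : List Unit}
    (h : D.HasPath x w y) : LenPath D x w.length y := by
  unfold LenPath
  rwa [← List.eq_replicate_length.2 fun _ _ => rfl]

theorem lenPath_of_views {D : GDB Unit} {x y : ℕ}
    (h : pathQuery V1lang D x y ∧ pathQuery V2lang D x y) :
    LenPath D x 2 y ∨ (LenPath D x 1 y ∧ LenPath D x 3 y) := by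
  obtain ⟨⟨v, hv, pv⟩, w, hw, pw⟩ := h
  have qv := pv.lenPath
  have qw := pw.lenPath
  rcases hv with hv | hv <;> rcases hw with hw | hw <;> rw [hv] at qv <;> rw [hw] at qw <;> tauto

/-- Appending a hop keeps the dichotomy: a hop of length `2` preserves each alternative, and a hop
of lengths `1` and `3` exchanges them. -/
theorem NearPath.hop {D : GDB Unit} {x y z k : ℕ} (h : NearPath D x k y)
    (h' : pathQuery V1lang D y z ∧ pathQuery V2lang D y z) : NearPath D x (k + 1) z := by
  rcases h with h | ⟨h, m, hm, hmp⟩ <;> rcases lenPath_of_views h' with p | ⟨p, q⟩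
  · exact .inl (h.add p)
  · exact .inr ⟨h.add q, 2 * k + 1, by omega, h.add p⟩
  · exact .inr ⟨h.add p, m + 2, by omega, hmp.add p⟩
  · exact .inl (h.add p)

theorem exists_nearPath {D : GDB Unit} {x y : ℕ} (hx : x ∈ D.nodes)
    (h : Relation.ReflTransGen (Trel D) x y) : ∃ n, NearPath D x (3 * n) y := by
  induction h with
  | refl => exact ⟨0, .inl (.nil hx)⟩
  | tail _ t ih =>
    obtain ⟨n, hn⟩ := ih
    obtain ⟨z₁, z₂, h₁, h₂, h₃⟩ := t
    exact ⟨n + 1, ((hn.hop h₁).hop h₂).hop h₃⟩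

/-- if `(x,y) ∈ T*` (reflexive–transitive closure of `T` on the nodes
of `D`), then either there is a path from `x` to `y` of length ≡ 0 (mod 6), or there
are both a path of length ≡ 1 (mod 6) and a path of length ≡ 5 (mod 6). -/
theorem stmt16 (D : GDB Unit) (x y : ℕ) (hx : x ∈ D.nodes) (hy : y ∈ D.nodes)
    (h : Relation.ReflTransGen (Trel D) x y) :
    (∃ n : ℕ, n % 6 = 0 ∧ D.HasPath x (List.replicate n ()) y) ∨
      ((∃ n : ℕ, n % 6 = 1 ∧ D.HasPath x (List.replicate n ()) y) ∧
       (∃ n : ℕ, n % 6 = 5 ∧ D.HasPath x (List.replicate n ()) y)) := by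
  obtain ⟨n, h | ⟨h, m, hm, hmp⟩⟩ := exists_nearPath hx h
  · exact .inl ⟨_, by omega, h⟩
  · exact .inr ⟨⟨_, by omega, h⟩, ⟨m, by omega, hmp⟩⟩
end

section
/- Let σ = {a}, let Q be the RPQ with L(Q) = {aⁿ : n ≥ 1 and n ≡ 1 or 2 (mod 6)}, and let V = {V₁, V₂} be the RPQ view with L(V₁) = {a, aa} and L(V₂) = {aa, aaa}. For a finite graph database D over σ, say that T(x,y) holds in V(D) if there exist nodes z₁, z₂ with (x,z₁), (z₁,z₂), (z₂,y) all in both V₁(D) and V₂(D); let T* be the reflexive–transitive closure of this relation, and define R by: (x,y) ∈ R(V(D)) iff there exists a node z with (x,z) ∈ V₁(D) and (z,y) ∈ T*. Then R is a rewriting of Q using V: for every finite graph database D over σ and all nodes x, y of D, (x,y) ∈ R(V(D)) if and only if (x,y) ∈ Q(D). In particular, V determines Q in a monotone way. -/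
/-- `L(Q) = {aⁿ : n ≥ 1, n ≡ 1 or 2 (mod 6)}`. -/
def LQ17 : Set (List Unit) :=
  {w | 1 ≤ w.length ∧ (w.length % 6 = 1 ∨ w.length % 6 = 2)}

/-- There is a path of length `n` from `x` to `y`, its label being ignored. -/
def PathLen (D : GDB Unit) (n x y : ℕ) : Prop :=
  ∃ w : List Unit, w.length = n ∧ D.HasPath x w y

theorem PathLen.trans {D : GDB Unit} {m n x y z : ℕ} (h : PathLen D m x y)
    (h' : PathLen D n y z) : PathLen D (m + n) x z := by
  obtain ⟨w, rfl, hw⟩ := h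
  obtain ⟨v, rfl, hv⟩ := h'
  refine ⟨w ++ v, by simp, ?_⟩
  induction hw with
  | nil _ => exact hv
  | cons e _ ih => exact .cons e (ih hv)

theorem GDB.HasPath.left_mem {D : GDB Unit} {x y : ℕ} {w : List Unit} (h : D.HasPath x w y) :
    x ∈ D.nodes := by
  cases h with
  | nil h => exact h
  | cons e _ => exact (D.edge_mem _ _ _ e).1

theorem PathLen.split {D : GDB Unit} {n y : ℕ} (m : ℕ) : ∀ {x : ℕ}, PathLen D (m + n) x y →
    ∃ z, PathLen D m x z ∧ PathLen D n z y := by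
  induction m with
  | zero =>
    rintro x ⟨w, hl, hw⟩
    exact ⟨x, ⟨[], rfl, .nil hw.left_mem⟩, ⟨w, by omega, hw⟩⟩
  | succ m ih =>
    rintro x ⟨w, hl, hw⟩
    cases hw with
    | nil _ => simp at hl; omega
    | cons e hw =>
      obtain ⟨z, ⟨v, hv, hp⟩, hz⟩ := ih ⟨_, by simp at hl; omega, hw⟩
      exact ⟨z, ⟨_ :: v, by simp [hv], .cons e hp⟩, hz⟩

theorem v1_iff {D : GDB Unit} {x y : ℕ} :
    pathQuery V1lang D x y ↔ PathLen D 1 x y ∨ PathLen D 2 x y := by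
  constructor
  · rintro ⟨w, h | h, hw⟩
    exacts [.inl ⟨w, h, hw⟩, .inr ⟨w, h, hw⟩]
  · rintro (⟨w, h, hw⟩ | ⟨w, h, hw⟩)
    exacts [⟨w, .inl h, hw⟩, ⟨w, .inr h, hw⟩]

theorem v2_iff {D : GDB Unit} {x y : ℕ} :
    pathQuery V2lang D x y ↔ PathLen D 2 x y ∨ PathLen D 3 x y := by
  constructor
  · rintro ⟨w, h | h, hw⟩
    exacts [.inl ⟨w, h, hw⟩, .inr ⟨w, h, hw⟩]
  · rintro (⟨w, h, hw⟩ | ⟨w, h, hw⟩)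
    exacts [⟨w, .inl h, hw⟩, ⟨w, .inr h, hw⟩]

theorem q_iff {D : GDB Unit} {x y : ℕ} :
    pathQuery LQ17 D x y ↔ ∃ n, (n % 6 = 1 ∨ n % 6 = 2) ∧ PathLen D n x y := by
  constructor
  · rintro ⟨w, ⟨_, h⟩, hw⟩
    exact ⟨_, h, w, rfl, hw⟩
  · rintro ⟨_, h, w, rfl, hw⟩
    exact ⟨w, ⟨by omega, h⟩, hw⟩

theorem both_iff {D : GDB Unit} {x y : ℕ} :
    (pathQuery V1lang D x y ∧ pathQuery V2lang D x y) ↔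
      PathLen D 2 x y ∨ (PathLen D 1 x y ∧ PathLen D 3 x y) := by
  rw [v1_iff, v2_iff]
  tauto

/-- With `k` of the three steps joined by paths of both lengths 1 and 3, every length among
`6 - k, 6 - k + 2, …, 6 + k` is realised. -/
theorem pathLen_of_trel {D : GDB Unit} {x y : ℕ} (h : Trel D x y) :
    PathLen D 6 x y ∨ (PathLen D 5 x y ∧ PathLen D 7 x y) := by
  obtain ⟨z₁, z₂, h₁, h₂, h₃⟩ := h
  rw [both_iff] at h₁ h₂ h₃
  rcases h₁ with a | ⟨a, a'⟩ <;> rcases h₂ with b | ⟨b, b'⟩ <;> rcases h₃ with c | ⟨c, c'⟩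
  · exact .inl ((a.trans b).trans c)
  · exact .inr ⟨(a.trans b).trans c, (a.trans b).trans c'⟩
  · exact .inr ⟨(a.trans b).trans c, (a.trans b').trans c⟩
  · exact .inl ((a.trans b).trans c')
  · exact .inr ⟨(a.trans b).trans c, (a'.trans b).trans c⟩
  · exact .inl ((a.trans b).trans c')
  · exact .inl ((a.trans b').trans c)
  · exact .inr ⟨(a.trans b).trans c', (a.trans b').trans c'⟩

theorem trel_of_pathLen {D : GDB Unit} {x y : ℕ} (h : PathLen D 6 x y) : Trel D x y := by
  obtain ⟨z₁, h₁, h⟩ := PathLen.split (n := 4) 2 h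
  obtain ⟨z₂, h₂, h₃⟩ := PathLen.split (n := 2) 2 h
  exact ⟨z₁, z₂, both_iff.2 (.inl h₁), both_iff.2 (.inl h₂), both_iff.2 (.inl h₃)⟩

theorem star_of_pathLen {D : GDB Unit} {y : ℕ} (k : ℕ) :
    ∀ {x : ℕ}, PathLen D (6 * k) x y → Relation.ReflTransGen (Trel D) x y := by
  induction k with
  | zero =>
    rintro x ⟨w, hl, hw⟩
    cases hw with
    | nil _ => exact .refl
    | cons _ _ => simp at hl
  | succ k ih =>
    intro x h
    rw [show 6 * (k + 1) = 6 + 6 * k by ring] at h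
    obtain ⟨z, hz, h⟩ := h.split
    exact .head (trel_of_pathLen hz) (ih h)

theorem rewriting_iff (D : GDB Unit) (x y : ℕ) :
    (∃ z : ℕ, pathQuery V1lang D x z ∧ Relation.ReflTransGen (Trel D) z y) ↔
      pathQuery LQ17 D x y := by
  rw [q_iff]
  constructor
  · rintro ⟨z, hz, h⟩
    induction h with
    | refl =>
      rcases v1_iff.1 hz with h | h
      exacts [⟨1, by simp, h⟩, ⟨2, by simp, h⟩]
    | tail _ ht ih =>
      obtain ⟨n, hn, hp⟩ := ih
      rcases pathLen_of_trel ht with h | ⟨h5, h7⟩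
      · exact ⟨n + 6, by omega, hp.trans h⟩
      · rcases hn with hn | hn
        · exact ⟨n + 7, by omega, hp.trans h7⟩
        · exact ⟨n + 5, by omega, hp.trans h5⟩
  · rintro ⟨n, hn, hp⟩
    rw [show n = n % 6 + 6 * (n / 6) by omega] at hp
    obtain ⟨z, hz, h⟩ := hp.split
    refine ⟨z, v1_iff.2 ?_, star_of_pathLen _ h⟩
    rcases hn with hn | hn <;> rw [hn] at hz
    exacts [.inl hz, .inr hz]

/-- `R(x,y) = ∃z, V₁(x,z) ∧ T*(z,y)` is a rewriting of `Q` using `V`;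
in particular `V` determines `Q` in a monotone way. -/
theorem stmt17 :
    (∀ (D : GDB Unit) (x y : ℕ), x ∈ D.nodes → y ∈ D.nodes →
        ((∃ z : ℕ, pathQuery V1lang D x z ∧ Relation.ReflTransGen (Trel D) z y) ↔
          pathQuery LQ17 D x y)) ∧
    (∀ D D' : GDB Unit,
        (∀ x y, pathQuery V1lang D x y → pathQuery V1lang D' x y) →
        (∀ x y, pathQuery V2lang D x y → pathQuery V2lang D' x y) →
        ∀ x y, pathQuery LQ17 D x y → pathQuery LQ17 D' x y) := by
  refine ⟨fun D x y _ _ => rewriting_iff D x y, fun D D' h1 h2 x y h => ?_⟩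
  obtain ⟨z, hz, ht⟩ := (rewriting_iff D x y).2 h
  refine (rewriting_iff D' x y).1 ⟨z, h1 _ _ hz, Relation.ReflTransGen.mono ?_ _ _ ht⟩
  rintro u v ⟨z₁, z₂, ⟨a, a'⟩, ⟨b, b'⟩, ⟨c, c'⟩⟩
  exact ⟨z₁, z₂, ⟨h1 _ _ a, h2 _ _ a'⟩, ⟨h1 _ _ b, h2 _ _ b'⟩, ⟨h1 _ _ c, h2 _ _ c'⟩⟩
end
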